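/- For every continuously differentiable function f on the closed unit ball of ℝ³ and every ε ∈ (0,1), one has (1−ε)·∫_{B₁} f(x)²/|x|² dx ≤ ∫_{∂B₁} f² dσ + ε⁻¹·∫_{B₁} |∇f|² dx. -/

import Mathlib

open MeasureTheory Metric
open scoped RealInnerProductSpace

noncomputable section

/-!
In polar coordinates about the origin of an `(n + 1)`-dimensional space, integrate the derivative
of `r ^ (n - 1) * f (r • ω) ^ 2` over `0 < r < R` along a ray of direction `ω`. It is the sum of
`(n - 1) * r ^ (n - 2) * f (r • ω) ^ 2` and the cross term `2 * r ^ (n - 1) * f * ∂ᵣf`, which AM-GM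
bounds below by `-(ε * r ^ (n - 2) * f ^ 2 + ε⁻¹ * r ^ n * (∂ᵣf) ^ 2)`. Integrating over `ω` gives
the inequality with the surface measure `Measure.toSphere`.

Mathlib's `μH[n]` is not normalised (for `n = 2` it is `4 / π` times the surface area), hence
`toSphere` is compared with it rather than identified. A thin shell over a set of directions of
small diameter `d` fits into a box with one side close to the thickness of the shell and `n` sides
close to `d`, so the surface measure of the set is at most about `d ^ n`.
-/

section PolarCoordinates

open Set Module

lemma map_subtype_val_volumeIoiPow (n : ℕ) :
    (Measure.volumeIoiPow n).map Subtype.val =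
      (volume.restrict (Ioi (0 : ℝ))).withDensity fun r ↦ ENNReal.ofReal (r ^ n) := by
  ext s hs
  rw [Measure.map_apply measurable_subtype_coe hs, Measure.volumeIoiPow,
    withDensity_apply _ (measurable_subtype_coe hs), withDensity_apply _ hs,
    setLIntegral_subtype measurableSet_Ioi _ fun r : ℝ ↦ ENNReal.ofReal (r ^ n),
    Subtype.image_preimage_coe, Measure.restrict_restrict hs, inter_comm]

lemma ae_snd_mem_of_prod_restrict {α β : Type*} [MeasurableSpace α] [MeasurableSpace β]
    (ν : Measure α) (ρ : Measure β) [SFinite ρ] {s : Set β} (hs : MeasurableSet s) :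
    ∀ᵐ p ∂ν.prod (ρ.restrict s), p.2 ∈ s :=
  Measure.quasiMeasurePreserving_snd.ae (ae_restrict_mem hs)

variable {E F : Type*} [NormedAddCommGroup E] [NormedSpace ℝ E] [FiniteDimensional ℝ E]
  [MeasurableSpace E] [BorelSpace E] [NormedAddCommGroup F] [NormedSpace ℝ F]
  {μ : Measure E} [μ.IsAddHaarMeasure] {n : ℕ} {R : ℝ} {k : E → F}

lemma measurePreserving_smul_sphere (μ : Measure E) [μ.IsAddHaarMeasure]
    (hn : finrank ℝ E = n + 1) :
    MeasurePreserving (fun p : sphere (0 : E) 1 × ℝ ↦ p.2 • (p.1 : E))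
      (μ.toSphere.prod
        ((volume.restrict (Ioi 0)).withDensity fun r ↦ ENNReal.ofReal (r ^ n))) μ := by
  have : Nontrivial E := nontrivial_of_finrank_pos (R := ℝ) (by lia)
  have hpolar : MeasurePreserving (homeomorphUnitSphereProd E).symm.toMeasurableEquiv
      (μ.toSphere.prod (Measure.volumeIoiPow n)) (μ.comap (↑)) := by
    simpa [hn] using
      MeasurePreserving.symm (homeomorphUnitSphereProd E).toMeasurableEquiv
        μ.measurePreserving_homeomorphUnitSphereProd
  have hval : MeasurePreserving (Subtype.val : ({0}ᶜ : Set E) → E) (μ.comap (↑)) μ := by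
    simpa [restrict_compl_singleton] using
      measurePreserving_subtype_coe (μa := μ) (measurableSet_singleton (0 : E)).compl
  have hcoe := (MeasurePreserving.id μ.toSphere).prod
    ⟨measurable_subtype_coe, map_subtype_val_volumeIoiPow n⟩
  refine ⟨by fun_prop, ?_⟩
  rw [← hcoe.map_eq, Measure.map_map (by fun_prop) hcoe.measurable]
  exact (hval.comp hpolar).map_eq

lemma measurePreserving_smul_sphere_ball (μ : Measure E) [μ.IsAddHaarMeasure]
    (hn : finrank ℝ E = n + 1) (R : ℝ) :
    MeasurePreserving (fun p : sphere (0 : E) 1 × ℝ ↦ p.2 • (p.1 : E))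
      ((μ.toSphere.prod (volume.restrict (Ioo 0 R))).withDensity
        fun p ↦ ENNReal.ofReal (p.2 ^ n)) (μ.restrict (ball 0 R)) := by
  have h := (measurePreserving_smul_sphere μ hn).restrict_preimage
    (measurableSet_ball (x := (0 : E)) (ε := R))
  have hpre : (fun p : sphere (0 : E) 1 × ℝ ↦ p.2 • (p.1 : E)) ⁻¹' ball 0 R =
      univ ×ˢ Ioo (-R) R := by
    ext p
    simp [norm_smul, abs_lt]
  have hIoo : Ioo (-R) R ∩ Ioi 0 = Ioo 0 R := by
    ext r
    simp only [mem_inter_iff, mem_Ioo, mem_Ioi]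
    grind
  rwa [hpre, ← Measure.prod_restrict, Measure.restrict_univ,
    restrict_withDensity measurableSet_Ioo, Measure.restrict_restrict measurableSet_Ioo, hIoo,
    prod_withDensity_right (by fun_prop)] at h

lemma integrable_pow_smul_comp_smul_sphere (hn : finrank ℝ E = n + 1)
    (hk : IntegrableOn k (ball 0 R) μ) :
    Integrable (fun p : sphere (0 : E) 1 × ℝ ↦ p.2 ^ n • k (p.2 • (p.1 : E)))
      (μ.toSphere.prod (volume.restrict (Ioo 0 R))) := by
  have h := (measurePreserving_smul_sphere_ball μ hn R).integrable_comp_of_integrable hk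
  rw [integrable_withDensity_iff_integrable_smul' (by fun_prop) (by simp)] at h
  refine h.congr ?_
  filter_upwards [ae_snd_mem_of_prod_restrict μ.toSphere volume measurableSet_Ioo] with p hp
  rw [ENNReal.toReal_ofReal (pow_nonneg hp.1.le n), Function.comp_apply]

lemma setIntegral_ball_eq_integral_sphere (hn : finrank ℝ E = n + 1)
    (hk : IntegrableOn k (ball 0 R) μ) :
    ∫ x in ball 0 R, k x ∂μ =
      ∫ ω : sphere (0 : E) 1, (∫ r in Ioo 0 R, r ^ n • k (r • (ω : E))) ∂μ.toSphere := by
  have hpolar := measurePreserving_smul_sphere_ball μ hn R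
  have hk' : AEStronglyMeasurable k (Measure.map _ _) := hpolar.map_eq ▸ hk.aestronglyMeasurable
  rw [← hpolar.map_eq, integral_map hpolar.aemeasurable hk',
    integral_withDensity_eq_integral_toReal_smul (by fun_prop) (by simp),
    ← integral_prod _ (integrable_pow_smul_comp_smul_sphere hn hk)]
  refine integral_congr_ae ?_
  filter_upwards [ae_snd_mem_of_prod_restrict μ.toSphere volume measurableSet_Ioo] with p hp
  rw [ENNReal.toReal_ofReal (pow_nonneg hp.1.le n)]

end PolarCoordinates

section Radial

open Set

variable {g g' G : ℝ → ℝ} {ε R : ℝ}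

lemma neg_two_mul_mul_le (hε : 0 < ε) (a b : ℝ) : -(2 * a * b) ≤ ε * a ^ 2 + ε⁻¹ * b ^ 2 := by
  have hsq : 0 ≤ ε⁻¹ * (ε * a + b) ^ 2 := by positivity
  have hexpand : ε⁻¹ * (ε * a + b) ^ 2 = ε * a ^ 2 + 2 * a * b + ε⁻¹ * b ^ 2 := by
    field_simp
    ring
  linarith

lemma hardy_inequality_Ioo (hε : 0 < ε) (k : ℕ) (hR : 0 ≤ R) (hg : ContinuousOn g (Icc 0 R))
    (hg' : ∀ r ∈ Ioo 0 R, HasDerivAt g (g' r) r) (hG : ∀ r ∈ Ioo 0 R, g' r ^ 2 ≤ G r)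
    (hGi : IntegrableOn (fun r ↦ r ^ (k + 2) * G r) (Ioo 0 R)) :
    (k + 1 - ε) * ∫ r in Ioo 0 R, r ^ k * g r ^ 2 ≤
      R ^ (k + 1) * g R ^ 2 + ε⁻¹ * ∫ r in Ioo 0 R, r ^ (k + 2) * G r := by
  have hgi : IntegrableOn (fun r ↦ r ^ k * g r ^ 2) (Ioo 0 R) :=
    (ContinuousOn.integrableOn_Icc (by fun_prop)).mono_set Ioo_subset_Icc_self
  have hdiff : IntegrableOn
      (fun r ↦ ε⁻¹ * (r ^ (k + 2) * G r) - (k + 1 - ε) * (r ^ k * g r ^ 2)) (Ioo 0 R) :=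
    (hGi.const_mul _).sub (hgi.const_mul _)
  have hderiv : ∀ r ∈ Ioo 0 R, HasDerivAt (fun r ↦ -(r ^ (k + 1) * g r ^ 2))
      (-((k + 1) * r ^ k * g r ^ 2 + r ^ (k + 1) * (2 * g r * g' r))) r := fun r hr ↦ by
    refine ((hasDerivAt_pow (k + 1) r).fun_mul ((hg' r hr).fun_pow 2)).fun_neg.congr_deriv ?_
    simp
  have hbound : ∀ r ∈ Ioo 0 R, -((k + 1) * r ^ k * g r ^ 2 + r ^ (k + 1) * (2 * g r * g' r)) ≤
      ε⁻¹ * (r ^ (k + 2) * G r) - (k + 1 - ε) * (r ^ k * g r ^ 2) := fun r hr ↦ by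
    have hr0 : 0 ≤ r := hr.1.le
    have hAMGM := mul_le_mul_of_nonneg_left
      (neg_two_mul_mul_le hε (g r) (r * g' r)) (pow_nonneg hr0 k)
    have hgG : ε⁻¹ * (r ^ (k + 2) * g' r ^ 2) ≤ ε⁻¹ * (r ^ (k + 2) * G r) := by
      gcongr
      exact hG r hr
    ring_nf at hAMGM hgG ⊢
    linarith
  have hFTC := intervalIntegral.sub_le_integral_of_hasDeriv_right_of_le hR
    (g := fun r ↦ -(r ^ (k + 1) * g r ^ 2))
    (by fun_prop) (fun r hr ↦ (hderiv r hr).hasDerivWithinAt)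
    ((integrableOn_Icc_iff_integrableOn_Ioo (by finiteness) (by finiteness)).2 hdiff) hbound
  rw [intervalIntegral.integral_of_le hR, integral_Ioc_eq_integral_Ioo,
    integral_sub (hGi.const_mul _) (hgi.const_mul _), integral_const_mul, integral_const_mul,
    zero_pow k.succ_ne_zero, zero_mul, neg_zero, sub_zero] at hFTC
  linarith

end Radial

section HardyToSphere

open Set Module

variable {E : Type*} [NormedAddCommGroup E] [NormedSpace ℝ E] {f : E → ℝ} {ε R : ℝ} {n : ℕ}

lemma hardy_inequality_ray (h2n : 2 ≤ n) (hε : 0 < ε) (hR : 0 ≤ R)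
    (hfc : ContinuousOn f (closedBall 0 R)) (hfd : DifferentiableOn ℝ f (ball 0 R))
    {ω : E} (hω : ‖ω‖ = 1)
    (hfi : IntegrableOn (fun r : ℝ ↦ r ^ n * ‖fderiv ℝ f (r • ω)‖ ^ 2) (Ioo 0 R)) :
    (n - 1 - ε) * ∫ r in Ioo 0 R, r ^ n * (f (r • ω) ^ 2 / ‖r • ω‖ ^ 2) ≤
      R ^ (n - 1) * f (R • ω) ^ 2 +
        ε⁻¹ * ∫ r in Ioo 0 R, r ^ n * ‖fderiv ℝ f (r • ω)‖ ^ 2 := by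
  obtain ⟨k, rfl⟩ := Nat.exists_eq_add_of_le' h2n
  have hcancel : ∫ r in Ioo 0 R, r ^ (k + 2) * (f (r • ω) ^ 2 / ‖r • ω‖ ^ 2) =
      ∫ r in Ioo 0 R, r ^ k * f (r • ω) ^ 2 :=
    setIntegral_congr_fun measurableSet_Ioo fun r hr ↦ by
      have := hr.1.ne'
      simp only [norm_smul, hω, mul_one, Real.norm_eq_abs, sq_abs]
      field_simp
      ring
  have hcoeff : ((k + 2 : ℕ) : ℝ) - 1 - ε = k + 1 - ε := by
    push_cast
    ring
  rw [hcancel, hcoeff]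
  refine hardy_inequality_Ioo (g' := fun r ↦ fderiv ℝ f (r • ω) ω) hε k hR
    (hfc.comp (by fun_prop) fun r hr ↦ ?_) (fun r hr ↦ ?_) (fun r _ ↦ ?_) hfi
  · simpa [norm_smul, hω, abs_of_nonneg hr.1] using hr.2
  · have hball : r • ω ∈ ball (0 : E) R := by simpa [norm_smul, hω, abs_of_pos hr.1] using hr.2
    have hray : HasDerivAt (fun r : ℝ ↦ r • ω) ω r := by
      simpa using (hasDerivAt_id r).smul_const ω
    exact (hfd.differentiableAt (isOpen_ball.mem_nhds hball)).hasFDerivAt.comp_hasDerivAt r hray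
  · rw [← sq_abs, ← Real.norm_eq_abs]
    gcongr
    simpa [hω] using (fderiv ℝ f (r • ω)).le_opNorm ω

variable [FiniteDimensional ℝ E] [MeasurableSpace E] [BorelSpace E]
  {μ : Measure E} [μ.IsAddHaarMeasure]

lemma integrableOn_inv_sq_norm_ball (hn : finrank ℝ E = n + 1) (h2n : 2 ≤ n) :
    IntegrableOn (fun x : E ↦ (‖x‖ ^ 2)⁻¹) (ball 0 R) μ := by
  have : Nontrivial E := nontrivial_of_finrank_pos (R := ℝ) (by lia)
  obtain ⟨k, rfl⟩ := Nat.exists_eq_add_of_le' h2n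
  rw [integrableOn_fun_norm_addHaar μ (f := fun y : ℝ ↦ (y ^ 2)⁻¹), hn, Nat.add_sub_cancel]
  have hpow : IntegrableOn (fun y : ℝ ↦ y ^ k) (Ioo 0 R) :=
    (ContinuousOn.integrableOn_Icc (by fun_prop)).mono_set Ioo_subset_Icc_self
  refine hpow.congr_fun (fun y hy ↦ ?_) measurableSet_Ioo
  have := hy.1.ne'
  simp [pow_add, this]

lemma integrableOn_div_sq_norm_ball (hn : finrank ℝ E = n + 1) (h2n : 2 ≤ n)
    (hfc : ContinuousOn f (closedBall 0 R)) :
    IntegrableOn (fun x ↦ f x / ‖x‖ ^ 2) (ball 0 R) μ := by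
  obtain ⟨M, hM⟩ := (isCompact_closedBall (0 : E) R).exists_bound_of_continuousOn hfc
  simp_rw [div_eq_mul_inv]
  refine (integrableOn_inv_sq_norm_ball hn h2n).bdd_mul (c := M)
    ((hfc.mono ball_subset_closedBall).aestronglyMeasurable measurableSet_ball) ?_
  filter_upwards [ae_restrict_mem measurableSet_ball] with x hx
    using hM x (ball_subset_closedBall hx)

lemma integrable_toSphere_comp_smul (hR : 0 ≤ R) (hfc : ContinuousOn f (closedBall 0 R)) :
    Integrable (fun ω : sphere (0 : E) 1 ↦ f (R • (ω : E))) μ.toSphere := by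
  have hcont : Continuous fun ω : sphere (0 : E) 1 ↦ f (R • (ω : E)) :=
    hfc.comp_continuous (by fun_prop) fun ω ↦ by simp [norm_smul, abs_of_nonneg hR]
  exact hcont.integrable_of_hasCompactSupport (.of_compactSpace _)

theorem hardy_inequality_toSphere (hn : finrank ℝ E = n + 1) (h2n : 2 ≤ n) (hε : 0 < ε)
    (hR : 0 ≤ R) (hfc : ContinuousOn f (closedBall 0 R)) (hfd : DifferentiableOn ℝ f (ball 0 R))
    (hfi : IntegrableOn (fun x ↦ ‖fderiv ℝ f x‖ ^ 2) (ball 0 R) μ) :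
    (n - 1 - ε) * ∫ x in ball 0 R, f x ^ 2 / ‖x‖ ^ 2 ∂μ ≤
      R ^ (n - 1) * ∫ ω : sphere (0 : E) 1, f (R • (ω : E)) ^ 2 ∂μ.toSphere +
        ε⁻¹ * ∫ x in ball 0 R, ‖fderiv ℝ f x‖ ^ 2 ∂μ := by
  have hfq : IntegrableOn (fun x ↦ f x ^ 2 / ‖x‖ ^ 2) (ball 0 R) μ :=
    integrableOn_div_sq_norm_ball hn h2n (hfc.pow 2)
  have hfq_polar := integrable_pow_smul_comp_smul_sphere hn hfq
  have hfi_polar := integrable_pow_smul_comp_smul_sphere hn hfi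
  have hbdry : Integrable (fun ω : sphere (0 : E) 1 ↦ R ^ (n - 1) * f (R • (ω : E)) ^ 2)
      μ.toSphere :=
    (integrable_toSphere_comp_smul hR (hfc.pow 2)).const_mul _
  have hgrad : Integrable (fun ω : sphere (0 : E) 1 ↦
      ε⁻¹ * ∫ r in Ioo 0 R, r ^ n • ‖fderiv ℝ f (r • (ω : E))‖ ^ 2) μ.toSphere :=
    hfi_polar.integral_prod_left.const_mul _
  rw [setIntegral_ball_eq_integral_sphere hn hfq, setIntegral_ball_eq_integral_sphere hn hfi,
    ← integral_const_mul, ← integral_const_mul, ← integral_const_mul,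
    ← integral_add hbdry hgrad]
  refine integral_mono_ae (hfq_polar.integral_prod_left.const_mul _) (hbdry.add hgrad) ?_
  filter_upwards [hfi_polar.prod_right_ae] with ω hω
    using hardy_inequality_ray h2n hε hR hfc hfd (norm_eq_of_mem_sphere ω) hω

end HardyToSphere

section Shell

open Set Module Measure
open scoped Pointwise

variable {E : Type*} [NormedAddCommGroup E] [NormedSpace ℝ E] {S : Set (sphere (0 : E) 1)}
  {h d a : ℝ}

/-- The shell of thickness `h` over a set `S` of directions, outside the unit sphere. Its volume is
comparable to `h` times the surface measure of `S`, which makes it the link between `toSphere` and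
volumes of boxes. -/
def sphericalShell (S : Set (sphere (0 : E) 1)) (h : ℝ) : Set E :=
  Ico (1 : ℝ) (1 + h) • ((↑) '' S)

lemma ediam_image_sphericalShell_le (ℓ : E →ₗ[ℝ] ℝ) (hh : 0 ≤ h)
    (hd : ∀ s ∈ S, ∀ t ∈ S, |ℓ s - ℓ t| ≤ d) (ha : ∀ s ∈ S, |ℓ s| ≤ a) :
    ediam (ℓ '' sphericalShell S h) ≤ ENNReal.ofReal ((1 + h) * d + h * a) := by
  refine ediam_le ?_
  rintro _ ⟨_, ⟨r, hr, _, ⟨s, hs, rfl⟩, rfl⟩, rfl⟩ _ ⟨_, ⟨q, hq, _, ⟨t, ht, rfl⟩, rfl⟩, rfl⟩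
  rw [edist_dist, Real.dist_eq]
  refine ENNReal.ofReal_le_ofReal ?_
  have hr0 : |r| ≤ 1 + h := abs_le.2 ⟨by linarith [hr.1], hr.2.le⟩
  have hrq : |r - q| ≤ h := abs_le.2 ⟨by linarith [hr.1, hq.2], by linarith [hr.2, hq.1]⟩
  calc |ℓ (r • s) - ℓ (q • t)| = |r * (ℓ s - ℓ t) + (r - q) * ℓ t| := by
        simp only [map_smul, smul_eq_mul]
        ring_nf
    _ ≤ |r| * |ℓ s - ℓ t| + |r - q| * |ℓ t| := by
        simpa only [abs_mul] using abs_add_le (r * (ℓ s - ℓ t)) ((r - q) * ℓ t)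
    _ ≤ (1 + h) * d + h * a := by
        gcongr
        exacts [hd s hs t ht, ha t ht]

variable [FiniteDimensional ℝ E] [MeasurableSpace E] [BorelSpace E]

lemma toSphere_mul_le_measure_sphericalShell (μ : Measure E) [μ.IsAddHaarMeasure]
    (hS : MeasurableSet S) (hh : 0 ≤ h) :
    μ.toSphere S * ENNReal.ofReal h ≤ μ (sphericalShell S h) := by
  set C : Set E := Ioo (0 : ℝ) 1 • ((↑) '' S)
  have hCfin : μ C ≠ ⊤ := by
    refine measure_ne_top_of_subset ?_ (measure_ball_lt_top (μ := μ) (x := 0) (r := 1)).ne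
    rintro _ ⟨r, hr, _, ⟨s, -, rfl⟩, rfl⟩
    simpa [norm_smul, abs_of_pos hr.1] using hr.2
  have hcover : (1 + h) • C ⊆ C ∪ sphericalShell S h := by
    rintro _ ⟨_, ⟨r, hr, s, hs, rfl⟩, rfl⟩
    have hlt : (1 + h) * r < 1 + h := by nlinarith [hr.2]
    have hpos : 0 < (1 + h) * r := mul_pos (by linarith) hr.1
    rcases lt_or_ge ((1 + h) * r) 1 with hinside | houtside
    · exact .inl ⟨(1 + h) * r, ⟨hpos, hinside⟩, s, hs, mul_smul _ _ _⟩
    · exact .inr ⟨(1 + h) * r, ⟨houtside, hlt⟩, s, hs, mul_smul _ _ _⟩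
  have hbernoulli : 1 + finrank ℝ E * h ≤ (1 + h) ^ finrank ℝ E :=
    one_add_mul_le_pow (by linarith) _
  have hscale : μ C + finrank ℝ E * ENNReal.ofReal h * μ C ≤ μ C + μ (sphericalShell S h) :=
    calc μ C + finrank ℝ E * ENNReal.ofReal h * μ C
        = ENNReal.ofReal (1 + finrank ℝ E * h) * μ C := by
          rw [ENNReal.ofReal_add zero_le_one (by positivity), ENNReal.ofReal_one,
            ENNReal.ofReal_mul (by positivity), ENNReal.ofReal_natCast, add_mul, one_mul]
      _ ≤ ENNReal.ofReal ((1 + h) ^ finrank ℝ E) * μ C := by gcongr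
      _ = μ ((1 + h) • C) := (μ.addHaar_smul_of_nonneg (by linarith) C).symm
      _ ≤ μ C + μ (sphericalShell S h) := (measure_mono hcover).trans (measure_union_le _ _)
  rw [μ.toSphere_apply' hS, mul_right_comm]
  exact (ENNReal.add_le_add_iff_left hCfin).1 hscale

end Shell

section SphereGeometry

open Set Module

variable {E : Type*} [NormedAddCommGroup E] [InnerProductSpace ℝ E] {S : Set (sphere (0 : E) 1)}
  {h d : ℝ}

lemma abs_inner_sub_inner_le {p s t : E} (hp : ‖p‖ = 1) (hs : ‖s‖ = 1) (ht : ‖t‖ = 1)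
    (hsp : ‖s - p‖ ≤ h) (htp : ‖t - p‖ ≤ h) : |⟪p, s⟫ - ⟪p, t⟫| ≤ h ^ 2 / 2 := by
  -- `⟪p, s⟫ = 1 - ‖s - p‖ ^ 2 / 2`: the radial coordinate varies only to second order.
  have hs' := norm_sub_sq_real s p
  have ht' := norm_sub_sq_real t p
  rw [real_inner_comm, hs, hp] at hs'
  rw [real_inner_comm, ht, hp] at ht'
  have := pow_le_pow_left₀ (norm_nonneg _) hsp 2
  have := pow_le_pow_left₀ (norm_nonneg _) htp 2
  rw [abs_le]
  constructor <;> linarith [sq_nonneg ‖s - p‖, sq_nonneg ‖t - p‖]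

lemma ediam_inner_image_sphericalShell_le_of_radial {p : E} (hp : ‖p‖ = 1) (hh : 0 ≤ h)
    (hSp : ∀ s ∈ S, ‖(s : E) - p‖ ≤ h) :
    ediam ((fun x ↦ ⟪p, x⟫) '' sphericalShell S h) ≤ ENNReal.ofReal (h * (1 + h) ^ 2) := by
  refine (ediam_image_sphericalShell_le (innerₗ E p) (d := h ^ 2 / 2) (a := 1) hh
    (fun s hs t ht ↦ ?_) fun s _ ↦ ?_).trans (ENNReal.ofReal_le_ofReal ?_)
  · exact abs_inner_sub_inner_le hp (norm_eq_of_mem_sphere s) (norm_eq_of_mem_sphere t)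
      (hSp s hs) (hSp t ht)
  · simpa [hp] using abs_real_inner_le_norm p s
  · nlinarith [pow_nonneg hh 2, pow_nonneg hh 3]

lemma ediam_inner_image_sphericalShell_le_of_tangential {e p : E} (he : ‖e‖ = 1)
    (hep : ⟪e, p⟫ = 0) (hh : 0 ≤ h) (hd : 0 ≤ d) (hSp : ∀ s ∈ S, ‖(s : E) - p‖ ≤ d)
    (hS : ∀ s ∈ S, ∀ t ∈ S, ‖(s : E) - t‖ ≤ d) :
    ediam ((fun x ↦ ⟪e, x⟫) '' sphericalShell S h) ≤ ENNReal.ofReal (d * (1 + h) ^ 2) := by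
  have hcoord (v : E) : |⟪e, v⟫| ≤ ‖v‖ := by simpa [he] using abs_real_inner_le_norm e v
  refine (ediam_image_sphericalShell_le (innerₗ E e) (d := d) (a := d) hh
    (fun s hs t ht ↦ ?_) fun s hs ↦ ?_).trans (ENNReal.ofReal_le_ofReal ?_)
  · simpa [inner_sub_right] using (hcoord (s - t)).trans (hS s hs t ht)
  · simpa [inner_sub_right, hep] using (hcoord (s - p)).trans (hSp s hs)
  · nlinarith [mul_nonneg hd hh, mul_nonneg hd (sq_nonneg h)]

lemma contDiff_coe_stereographic_symm {v : E} (hv : ‖v‖ = 1) {m : WithTop ℕ∞} :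
    ContDiff ℝ m fun w : (ℝ ∙ v)ᗮ ↦ ((stereographic hv).symm w : E) :=
  contDiff_stereoInvFunAux.comp (ℝ ∙ v)ᗮ.subtypeL.contDiff

lemma stereographic_neg_symm_zero (p : sphere (0 : E) 1) :
    (stereographic (norm_eq_of_mem_sphere (-p))).symm 0 = p := by
  rw [← stereographic_neg_apply p]
  exact (stereographic _).left_inv (ne_neg_of_mem_unit_sphere ℝ p)

lemma exists_orthonormalBasis_zero_eq [FiniteDimensional ℝ E] {n : ℕ}
    (hn : finrank ℝ E = n + 1) {p : E} (hp : ‖p‖ = 1) :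
    ∃ b : OrthonormalBasis (Fin (n + 1)) ℝ E, b 0 = p := by
  have horth : Orthonormal ℝ (({0} : Set (Fin (n + 1))).domRestrict fun _ ↦ p) :=
    ⟨fun _ ↦ hp, fun i j hij ↦ (hij (Subsingleton.elim i j)).elim⟩
  obtain ⟨b, hb⟩ := horth.exists_orthonormalBasis_extension_of_card_eq (by simp [hn])
  exact ⟨b, hb 0 rfl⟩

end SphereGeometry

section Hausdorff

open Filter Set Module Measure
open scoped Topology

variable {ι E : Type*} [Fintype ι] [NormedAddCommGroup E] [InnerProductSpace ℝ E]
  [FiniteDimensional ℝ E] [MeasurableSpace E] [BorelSpace E] {S : Set (sphere (0 : E) 1)}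
  {h d : ℝ} {n : ℕ}

lemma volume_le_prod_ediam_repr (b : OrthonormalBasis ι ℝ E) (A : Set E) :
    volume A ≤ ∏ i, ediam ((fun x ↦ b.repr x i) '' A) := by
  have hmp := (PiLp.volume_preserving_ofLp ι).comp b.measurePreserving_repr
  have hemb : MeasurableEmbedding (WithLp.ofLp ∘ b.repr) :=
    (MeasurableEquiv.toLp 2 (ι → ℝ)).symm.measurableEmbedding.comp
      b.repr.toHomeomorph.measurableEmbedding
  calc volume A = volume ((WithLp.ofLp ∘ b.repr) '' A) := by
        rw [← hmp.measure_preimage_emb hemb, preimage_image_eq _ hemb.injective]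
    _ ≤ ∏ i, ediam (Function.eval i '' ((WithLp.ofLp ∘ b.repr) '' A)) :=
        Real.volume_pi_le_prod_diam _
    _ = ∏ i, ediam ((fun x ↦ b.repr x i) '' A) := by simp only [image_image]; rfl

lemma volume_sphericalShell_le (hn : finrank ℝ E = n + 1) (hh : 0 ≤ h) (hdh : d ≤ h)
    (hne : S.Nonempty) (hS : ∀ s ∈ S, ∀ t ∈ S, ‖(s : E) - t‖ ≤ d) :
    volume (sphericalShell S h) ≤ ENNReal.ofReal (h * d ^ n * ((1 + h) ^ 2) ^ (n + 1)) := by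
  obtain ⟨p, hpS⟩ := hne
  have hp := norm_eq_of_mem_sphere p
  have hd : 0 ≤ d := (norm_nonneg _).trans (hS p hpS p hpS)
  obtain ⟨b, hb⟩ := exists_orthonormalBasis_zero_eq hn hp
  have hradial : ediam ((fun x ↦ b.repr x 0) '' sphericalShell S h) ≤
      ENNReal.ofReal (h * (1 + h) ^ 2) := by
    simp only [b.repr_apply_apply, hb]
    exact ediam_inner_image_sphericalShell_le_of_radial hp hh
      fun s hs ↦ (hS s hs p hpS).trans hdh
  have htangential (i : Fin n) : ediam ((fun x ↦ b.repr x i.succ) '' sphericalShell S h) ≤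
      ENNReal.ofReal (d * (1 + h) ^ 2) := by
    simp only [b.repr_apply_apply]
    exact ediam_inner_image_sphericalShell_le_of_tangential (b.norm_eq_one i.succ)
      (hb ▸ b.inner_eq_zero (Fin.succ_ne_zero i)) hh hd (fun s hs ↦ hS s hs p hpS) hS
  calc volume (sphericalShell S h)
      ≤ ∏ i, ediam ((fun x ↦ b.repr x i) '' sphericalShell S h) := volume_le_prod_ediam_repr b _
    _ ≤ ENNReal.ofReal (h * (1 + h) ^ 2) * ENNReal.ofReal (d * (1 + h) ^ 2) ^ n := by
        rw [Fin.prod_univ_succ]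
        gcongr
        simpa using Finset.prod_le_pow_card Finset.univ _ _ fun i _ ↦ htangential i
    _ = ENNReal.ofReal (h * d ^ n * ((1 + h) ^ 2) ^ (n + 1)) := by
        rw [← ENNReal.ofReal_pow (by positivity), ← ENNReal.ofReal_mul (by positivity), mul_pow]
        ring_nf

lemma toSphere_le_mul_ediam_pow (hn : finrank ℝ E = n + 1) (hh : 0 < h)
    (hS : ediam S ≤ ENNReal.ofReal h) :
    (volume : Measure E).toSphere S ≤ ENNReal.ofReal (((1 + h) ^ 2) ^ (n + 1)) * ediam S ^ n := by
  rcases S.eq_empty_or_nonempty with rfl | hne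
  · simp
  have hbdd : ediam (closure S) ≠ ⊤ := by
    rw [ediam_closure]
    exact ne_top_of_le_ne_top ENNReal.ofReal_ne_top hS
  have hdh : diam (closure S) ≤ h := by
    rw [diam, ediam_closure]
    exact ENNReal.toReal_le_of_le_ofReal hh.le hS
  have hshell : (volume : Measure E).toSphere (closure S) * ENNReal.ofReal h ≤
      ENNReal.ofReal (h * diam (closure S) ^ n * ((1 + h) ^ 2) ^ (n + 1)) :=
    (toSphere_mul_le_measure_sphericalShell volume measurableSet_closure hh.le).trans
      (volume_sphericalShell_le hn hh.le hdh hne.closure fun s hs t ht ↦ by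
        simpa [Subtype.dist_eq, dist_eq_norm] using dist_le_diam_of_mem' hbdd hs ht)
  refine (measure_mono subset_closure).trans ?_
  rw [← ENNReal.mul_le_mul_iff_left (c := ENNReal.ofReal h) (by simpa using hh) (by simp)]
  refine hshell.trans_eq ?_
  rw [← ediam_closure S, ← ENNReal.ofReal_toReal hbdd, ← diam,
    ← ENNReal.ofReal_pow diam_nonneg, ← ENNReal.ofReal_mul (by positivity),
    ← ENNReal.ofReal_mul (by positivity)]
  ring_nf

lemma toSphere_le_smul_hausdorffMeasure (hn : finrank ℝ E = n + 1) (hh : 0 < h) :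
    (volume : Measure E).toSphere ≤ ENNReal.ofReal (((1 + h) ^ 2) ^ (n + 1)) • μH[n] := by
  set c := ENNReal.ofReal (((1 + h) ^ 2) ^ (n + 1)) with hc
  have hc0 : c ≠ 0 := by simpa [hc] using by positivity
  have hle : c⁻¹ • (volume : Measure E).toSphere ≤ μH[n] := by
    refine le_hausdorffMeasure _ _ (ENNReal.ofReal h) (by simpa using hh) fun S hS ↦ ?_
    rw [Measure.smul_apply, smul_eq_mul, ENNReal.rpow_natCast,
      ENNReal.inv_mul_le_iff hc0 ENNReal.ofReal_ne_top]
    exact toSphere_le_mul_ediam_pow hn hh hS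
  intro S
  have hleS := hle S
  rwa [Measure.smul_apply, smul_eq_mul, ENNReal.inv_mul_le_iff hc0 ENNReal.ofReal_ne_top] at hleS

theorem toSphere_le_hausdorffMeasure (hn : finrank ℝ E = n + 1) :
    (volume : Measure E).toSphere ≤ μH[n] := by
  intro S
  have hconst : Tendsto (fun h : ℝ ↦ ENNReal.ofReal (((1 + h) ^ 2) ^ (n + 1))) (𝓝[>] 0) (𝓝 1) := by
    have hcont : Continuous fun h : ℝ ↦ ((1 + h) ^ 2) ^ (n + 1) := by fun_prop
    simpa [Function.comp_def] using
      ((ENNReal.continuous_ofReal.comp hcont).tendsto 0).mono_left nhdsWithin_le_nhds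
  have hlim := ENNReal.Tendsto.mul_const (b := (μH[n] : Measure (sphere (0 : E) 1)) S) hconst
    (.inl one_ne_zero)
  rw [one_mul] at hlim
  refine ge_of_tendsto hlim ?_
  filter_upwards [self_mem_nhdsWithin] with h hh
    using toSphere_le_smul_hausdorffMeasure hn hh S

lemma hausdorffMeasure_image_stereographic_symm_lt_top (hn : finrank ℝ E = n + 1) {v : E}
    (hv : ‖v‖ = 1) (r : ℝ) : μH[n] ((stereographic hv).symm '' closedBall 0 r) < ⊤ := by
  obtain ⟨C, hC⟩ := (contDiff_coe_stereographic_symm hv (m := 1)).contDiffOn.exists_lipschitzOnWith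
    one_ne_zero (convex_closedBall 0 r) (isCompact_closedBall _ _)
  have hLip : LipschitzOnWith C (stereographic hv).symm (closedBall 0 r) := hC
  have : Fact (finrank ℝ E = n + 1) := ⟨hn⟩
  have hF : finrank ℝ (ℝ ∙ v)ᗮ = n :=
    Submodule.finrank_orthogonal_span_singleton (norm_ne_zero_iff.1 (hv ▸ one_ne_zero))
  have hball : μH[n] (closedBall (0 : (ℝ ∙ v)ᗮ) r) < ⊤ := by
    rw [← hF]
    exact measure_closedBall_lt_top
  exact (hLip.hausdorffMeasure_image_le n.cast_nonneg).trans_lt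
    (ENNReal.mul_lt_top (by finiteness) hball)

lemma isFiniteMeasure_hausdorffMeasure_sphere (hn : finrank ℝ E = n + 1) :
    IsFiniteMeasure (μH[n] : Measure (sphere (0 : E) 1)) := by
  have : IsLocallyFiniteMeasure (μH[n] : Measure (sphere (0 : E) 1)) := by
    refine ⟨fun p ↦ ⟨_, ?_, hausdorffMeasure_image_stereographic_symm_lt_top hn
      (norm_eq_of_mem_sphere (-p)) 1⟩⟩
    nth_rw 1 [← stereographic_neg_symm_zero p]
    exact (isOpenEmbedding_stereographic_symm _).image_mem_nhds.2
      (closedBall_mem_nhds 0 one_pos)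
  infer_instance

end Hausdorff

section BoundaryIntegral

open Set Measure

variable {E F : Type*} [NormedAddCommGroup E] [MeasurableSpace E] [BorelSpace E]
  [NormedAddCommGroup F] [NormedSpace ℝ F]

lemma setIntegral_sphere_hausdorffMeasure {d : ℝ} (hd : 0 ≤ d) (c : E) (r : ℝ) (g : E → F) :
    ∫ x in sphere c r, g x ∂μH[d] = ∫ ω : sphere c r, g ω ∂μH[d] := by
  rw [← (MeasurableEmbedding.subtype_coe isClosed_sphere.measurableSet).integral_map,
    isometry_subtype_coe.map_hausdorffMeasure (.inl hd), Subtype.range_coe]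

end BoundaryIntegral

section HardyToHausdorff

open Set Module

lemma integrableOn_sq_norm_fderiv_ball {E F : Type*} [NormedAddCommGroup E] [NormedSpace ℝ E]
    [FiniteDimensional ℝ E] [MeasurableSpace E] [BorelSpace E] [NormedAddCommGroup F]
    [NormedSpace ℝ F] {μ : Measure E} [IsFiniteMeasureOnCompacts μ] {f : E → F} {c : E} {r : ℝ}
    (hr : 0 < r) (hf : ContDiffOn ℝ 1 f (closedBall c r)) :
    IntegrableOn (fun x ↦ ‖fderiv ℝ f x‖ ^ 2) (ball c r) μ := by
  have huniq : UniqueDiffOn ℝ (closedBall c r) :=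
    uniqueDiffOn_convex (convex_closedBall c r) (by
      rw [interior_closedBall c hr.ne']
      exact nonempty_ball.2 hr)
  have hcont : ContinuousOn (fun x ↦ ‖fderivWithin ℝ f (closedBall c r) x‖ ^ 2)
      (closedBall c r) :=
    (hf.continuousOn_fderivWithin huniq le_rfl).norm.pow 2
  refine ((hcont.integrableOn_compact (isCompact_closedBall c r)).mono_set
    ball_subset_closedBall).congr_fun (fun x hx ↦ ?_) measurableSet_ball
  simp only [fderivWithin_of_mem_nhds (closedBall_mem_nhds_of_mem hx)]

lemma norm_gradient {E : Type*} [NormedAddCommGroup E] [InnerProductSpace ℝ E] [CompleteSpace E]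
    (f : E → ℝ) (x : E) : ‖gradient f x‖ = ‖fderiv ℝ f x‖ :=
  LinearIsometryEquiv.norm_map _ _

variable {E : Type*} [NormedAddCommGroup E] [InnerProductSpace ℝ E] [FiniteDimensional ℝ E]
  [MeasurableSpace E] [BorelSpace E] {n : ℕ}

theorem hardy_inequality_with_boundary_general (hn : finrank ℝ E = n + 1) (h2n : 2 ≤ n)
    {f : E → ℝ} (hfc : ContinuousOn f (closedBall 0 1)) (hfd : DifferentiableOn ℝ f (ball 0 1))
    (hfi : IntegrableOn (fun x ↦ ‖gradient f x‖ ^ 2) (ball 0 1)) {ε : ℝ} (hε : 0 < ε) :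
    (n - 1 - ε) * ∫ x in ball (0 : E) 1, f x ^ 2 / ‖x‖ ^ 2 ≤
      (∫ x in sphere (0 : E) 1, f x ^ 2 ∂μH[n]) +
        ε⁻¹ * ∫ x in ball (0 : E) 1, ‖gradient f x‖ ^ 2 := by
  have : IsFiniteMeasure (μH[n] : Measure (sphere (0 : E) 1)) :=
    isFiniteMeasure_hausdorffMeasure_sphere hn
  have hcont : Continuous fun ω : sphere (0 : E) 1 ↦ f ω ^ 2 :=
    (hfc.mono sphere_subset_closedBall).domRestrict.pow 2
  have hsphere : ∫ ω : sphere (0 : E) 1, f ω ^ 2 ∂(volume : Measure E).toSphere ≤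
      ∫ ω : sphere (0 : E) 1, f ω ^ 2 ∂μH[n] :=
    integral_mono_measure (toSphere_le_hausdorffMeasure hn) (.of_forall fun _ ↦ sq_nonneg _)
      (hcont.integrable_of_hasCompactSupport (.of_compactSpace _))
  simp only [norm_gradient] at hfi ⊢
  have hardy := hardy_inequality_toSphere hn h2n hε zero_le_one hfc hfd hfi
  simp only [one_pow, one_mul, one_smul] at hardy
  rw [setIntegral_sphere_hausdorffMeasure n.cast_nonneg]
  linarith

end HardyToHausdorff

/-- Display (5.15): the Hardy-type inequality with boundary term on the unit ball of ℝ³. -/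
theorem hardy_inequality_with_boundary
    (f : EuclideanSpace ℝ (Fin 3) → ℝ)
    (hf : ContDiffOn ℝ 1 f (Metric.closedBall 0 1))
    (ε : ℝ) (hε : ε ∈ Set.Ioo (0:ℝ) 1) :
    (1 - ε) * ∫ x in Metric.ball (0 : EuclideanSpace ℝ (Fin 3)) 1, (f x) ^ 2 / ‖x‖ ^ 2 ≤
      (∫ x in Metric.sphere (0 : EuclideanSpace ℝ (Fin 3)) 1, (f x) ^ 2 ∂μH[2]) +
        ε⁻¹ * ∫ x in Metric.ball (0 : EuclideanSpace ℝ (Fin 3)) 1, ‖gradient f x‖ ^ 2 := by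
  have hfi : IntegrableOn (fun x ↦ ‖gradient f x‖ ^ 2) (ball 0 1) := by
    simpa only [norm_gradient] using integrableOn_sq_norm_fderiv_ball one_pos hf
  have hfd := (hf.differentiableOn one_ne_zero).mono ball_subset_closedBall
  have hcoeff : (2 : ℝ) - 1 = 1 := by norm_num
  simpa only [Nat.cast_ofNat, hcoeff] using
    hardy_inequality_with_boundary_general (n := 2) (by simp) le_rfl hf.continuousOn hfd hfi hε.1
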